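/- arXiv:2302.00337 — 2 statements merged into one kernel-verified Lean document; each statement's English description precedes it below -/
import Mathlib

section
/- For every natural number $q$ there exists a constant $C>0$ (depending only on $q$) such that for all real numbers $a<c<b$ and all real polynomials $p$ and $r$ of degree at most $q$, the function $w$ equal to $p$ on $(a,c)$ and to $r$ on $(c,b)$ satisfies $(b-a)\,p(a)^2\le C\Big(\int_a^c p(x)^2\,dx+\int_c^b r(x)^2\,dx+(b-c)\,\big(r(c)-p(c)\big)^2+(b-c)(c-a)\int_a^c p'(x)^2\,dx\Big)$, where $r(c)-p(c)$ is the jump $[w](c)$ of $w$ at $c$ and $p(a)=w(a^+)$. -/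
/-!
Split `(b - a) p(a)² = (c - a) p(a)² + (b - c) p(a)²`. The first term is controlled by `∫_a^c p²`
through the inverse trace inequality `h s(x₀)² ≤ K ∫_{x₀}^{x₀+h} s²` for polynomials `s` of degree
at most `q`. For the second, write `p(a) = r(c) - (r(c) - p(c)) - ∫_a^c p'`; then `r(c)` is
controlled by the trace inequality on `(c, b)` and `(∫_a^c p')² ≤ (c - a) ∫_a^c p'²` by
Cauchy–Schwarz.

The trace inequality reduces by an affine change of variables to the unit interval. There, the
`L²(0,1)` inner product is nondegenerate on the finite-dimensional space of polynomials of degree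
at most `q`, so evaluation at `0` is `s ↦ ∫ g s` for some polynomial `g`, and Cauchy–Schwarz gives
the bound with `K = ∫ g²`.
-/

open MeasureTheory intervalIntegral Polynomial

lemma sq_integral_mul_le {f g : ℝ → ℝ} (hf : Continuous f) (hg : Continuous g) {a b : ℝ}
    (hab : a ≤ b) :
    (∫ x in a..b, f x * g x) ^ 2 ≤ (∫ x in a..b, f x ^ 2) * ∫ x in a..b, g x ^ 2 := by
  have key : ∀ t : ℝ, 0 ≤ (∫ x in a..b, f x ^ 2) * (t * t)
      + (2 * ∫ x in a..b, f x * g x) * t + ∫ x in a..b, g x ^ 2 := by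
    intro t
    have h0 : 0 ≤ ∫ x in a..b, (t * f x + g x) ^ 2 :=
      integral_nonneg hab fun x _ => sq_nonneg _
    have h1 : ∫ x in a..b, (t * f x + g x) ^ 2
        = ∫ x in a..b, ((t * t) * f x ^ 2 + (2 * t) * (f x * g x) + g x ^ 2) := by
      congr 1; ext x; ring
    rw [h1, intervalIntegral.integral_add, intervalIntegral.integral_add,
      intervalIntegral.integral_const_mul, intervalIntegral.integral_const_mul] at h0
    · linarith
    all_goals exact Continuous.intervalIntegrable (by fun_prop) _ _
  have h := discrim_le_zero key
  unfold discrim at h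
  linarith

/-- The `L²(0,1)` inner product on real polynomials of degree at most `q`. -/
noncomputable def polyInner (q : ℕ) : LinearMap.BilinForm ℝ (degreeLT ℝ (q + 1)) :=
  LinearMap.mk₂ ℝ (fun s t => ∫ x in (0 : ℝ)..1, (s : ℝ[X]).eval x * (t : ℝ[X]).eval x)
    (by
      intro s s' t
      rw [← intervalIntegral.integral_add]
      · simp [add_mul]
      all_goals exact Continuous.intervalIntegrable (by fun_prop) _ _)
    (by
      intro k s t
      simp [mul_assoc])
    (by
      intro s t t'
      rw [← intervalIntegral.integral_add]
      · simp [mul_add]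
      all_goals exact Continuous.intervalIntegrable (by fun_prop) _ _)
    (by
      intro k s t
      simp [mul_left_comm])

lemma eq_zero_of_integral_sq_eq_zero (s : ℝ[X]) (h : ∫ x in (0 : ℝ)..1, s.eval x * s.eval x = 0) :
    s = 0 := by
  by_contra hs
  have hpos : 0 < ∫ x in (0 : ℝ)..1, s.eval x * s.eval x := by
    -- a nonzero polynomial has finitely many roots, hence is nonzero somewhere in `[0, 1]`
    obtain ⟨x, hx, hx'⟩ := (Set.Icc_infinite (zero_lt_one (α := ℝ))).exists_notMem_finset
      s.roots.toFinset
    refine intervalIntegral.integral_pos zero_lt_one (by fun_prop) (fun x _ => mul_self_nonneg _)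
      ⟨x, hx, ?_⟩
    have : s.eval x ≠ 0 := by simpa [hs] using hx'
    exact mul_self_pos.2 this
  exact hpos.ne' h

/-- Evaluation at `0` is represented by a polynomial in the `L²(0,1)` inner product. -/
lemma exists_riesz_eval_zero (q : ℕ) : ∃ g : ℝ[X], ∀ s : ℝ[X], s.natDegree ≤ q →
    s.eval 0 = ∫ x in (0 : ℝ)..1, g.eval x * s.eval x := by
  have hinj : Function.Injective (polyInner q) := by
    rw [injective_iff_map_eq_zero]
    intro s hs
    have : polyInner q s s = 0 := by rw [hs]; rfl
    exact Subtype.ext (eq_zero_of_integral_sq_eq_zero _ this)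
  have : FiniteDimensional ℝ (degreeLT ℝ (q + 1)) :=
    (degreeLTEquiv ℝ (q + 1)).symm.finiteDimensional
  have hsurj := (LinearMap.injective_iff_surjective_of_finrank_eq_finrank
    (Subspace.dual_finrank_eq (K := ℝ) (V := degreeLT ℝ (q + 1))).symm).1 hinj
  obtain ⟨g, hg⟩ := hsurj ((leval (0 : ℝ)).comp (degreeLT ℝ (q + 1)).subtype)
  refine ⟨g, fun s hs => ?_⟩
  have hmem : s ∈ degreeLT ℝ (q + 1) := by
    rw [mem_degreeLT]
    exact lt_of_le_of_lt degree_le_natDegree (by exact_mod_cast Nat.lt_succ_of_le hs)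
  have := LinearMap.congr_fun hg ⟨s, hmem⟩
  exact this.symm

/-- The inverse trace inequality at the left endpoint of an interval. -/
lemma exists_trace_const (q : ℕ) : ∃ K : ℝ, 0 ≤ K ∧ ∀ a b : ℝ, a < b →
    ∀ s : ℝ[X], s.natDegree ≤ q →
      (b - a) * s.eval a ^ 2 ≤ K * ∫ x in a..b, s.eval x ^ 2 := by
  obtain ⟨g, hg⟩ := exists_riesz_eval_zero q
  refine ⟨∫ x in (0 : ℝ)..1, g.eval x ^ 2,
    integral_nonneg zero_le_one fun x _ => sq_nonneg _, fun a b hab s hs => ?_⟩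
  have hdeg : (s.comp (C (b - a) * X + C a)).natDegree ≤ q := by
    refine natDegree_comp_le.trans ?_
    calc s.natDegree * (C (b - a) * X + C a).natDegree
        ≤ s.natDegree * 1 := Nat.mul_le_mul_left _ natDegree_linear_le
      _ ≤ q := by simpa using hs
  have h1 := hg _ hdeg
  have h2 := sq_integral_mul_le g.continuous (s.comp (C (b - a) * X + C a)).continuous
    (zero_le_one (α := ℝ))
  rw [← h1] at h2
  have h3 := intervalIntegral.mul_integral_comp_mul_add (a := 0) (b := 1)
    (f := fun x => s.eval x ^ 2) (b - a) a
  simp only [mul_zero, zero_add, mul_one, sub_add_cancel] at h3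
  simp only [eval_comp, eval_add, eval_mul, eval_C, eval_X, mul_zero, zero_add] at h2
  rw [← h3]
  have := mul_le_mul_of_nonneg_left h2 (sub_nonneg.2 hab.le)
  linarith

/-- An inverse inequality for piecewise polynomials `𝒫((a,c),(c,b))`:
for each degree bound `q` there is `C > 0` such that for all `a < c < b` and
polynomials `p, r` of degree at most `q`,
`(b - a) p(a)² ≤ C (∫_a^c p² + ∫_c^b r² + (b - c) (r(c) - p(c))²
  + (b - c)(c - a) ∫_a^c (p')²)`. -/
theorem inv_ineq_piecewise_poly (q : ℕ) :
    ∃ C : ℝ, 0 < C ∧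
      ∀ (a c b : ℝ), a < c → c < b →
        ∀ (p r : Polynomial ℝ), p.natDegree ≤ q → r.natDegree ≤ q →
          (b - a) * (p.eval a) ^ 2 ≤
            C * ((∫ x in a..c, (p.eval x) ^ 2) + (∫ x in c..b, (r.eval x) ^ 2)
              + (b - c) * (r.eval c - p.eval c) ^ 2
              + (b - c) * (c - a) * ∫ x in a..c, (p.derivative.eval x) ^ 2) := by
  obtain ⟨K, hK, htr⟩ := exists_trace_const q
  refine ⟨3 * K + 3, by positivity, fun a c b hac hcb p r hp hr => ?_⟩
  have hP := htr a c hac p hp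
  have hR := htr c b hcb r hr
  have hFTC : ∫ x in a..c, p.derivative.eval x = p.eval c - p.eval a :=
    intervalIntegral.integral_eq_sub_of_hasDerivAt (fun x _ => p.hasDerivAt x)
      (p.derivative.continuous.intervalIntegrable _ _)
  have hCS := sq_integral_mul_le (f := fun _ => 1) continuous_const p.derivative.continuous hac.le
  simp only [one_mul, one_pow, intervalIntegral.integral_const, smul_eq_mul, mul_one, hFTC] at hCS
  have hIp : 0 ≤ ∫ x in a..c, p.eval x ^ 2 := integral_nonneg hac.le fun x _ => sq_nonneg _
  have hIr : 0 ≤ ∫ x in c..b, r.eval x ^ 2 := integral_nonneg hcb.le fun x _ => sq_nonneg _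
  have hbc : 0 ≤ b - c := sub_nonneg.2 hcb.le
  generalize (∫ x in a..c, p.eval x ^ 2) = Ip at *
  generalize (∫ x in c..b, r.eval x ^ 2) = Ir at *
  generalize (∫ x in a..c, p.derivative.eval x ^ 2) = D at *
  have hsplit : p.eval a ^ 2 ≤ 3 * r.eval c ^ 2 + 3 * (r.eval c - p.eval c) ^ 2
      + 3 * (p.eval c - p.eval a) ^ 2 := by
    nlinarith [sq_nonneg (r.eval c + (r.eval c - p.eval c)),
      sq_nonneg (r.eval c + (p.eval c - p.eval a)),
      sq_nonneg ((r.eval c - p.eval c) - (p.eval c - p.eval a))]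
  have h1 := mul_le_mul_of_nonneg_left hsplit hbc
  have h2 := mul_le_mul_of_nonneg_left hCS hbc
  have hJ : 0 ≤ (b - c) * (r.eval c - p.eval c) ^ 2 := by positivity
  have hD : 0 ≤ (b - c) * (c - a) * D := by
    have : 0 ≤ (b - c) * (p.eval c - p.eval a) ^ 2 := by positivity
    linarith
  have e1 := mul_nonneg hK hIp
  have e2 := mul_nonneg hK hIr
  have e3 := mul_nonneg hK hJ
  have e4 := mul_nonneg hK hD
  linarith
end

section
/- For every natural number $q$ there exists a constant $C>0$ (depending only on $q$) such that for every real polynomial $p$ of degree at most $q$ and all real numbers $a<b$, $(b-a)\,p(a)^2\le C\int_a^b p(x)^2\,dx$. -/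
open MeasureTheory intervalIntegral Polynomial

/-!
The `(q+1)`-st forward difference of a polynomial of degree at most `q` vanishes, so `p a` is a
fixed linear combination of the values `p (a + h), p (a + 2h), …, p (a + (q+1)h)`, with weights
independent of `p`, `a` and the step `h` (`exists_extrapolation_weights`). Cauchy–Schwarz bounds
`p(a)²` by a constant times the sum of the squares of these values. Integrating this bound in `h`
over `[0, (b-a)/(q+1)]`, the substitution `x = a + (k+1)h` bounds each term on the right by
`∫_a^b p²` (`integral_node_le`), which gives the inequality with an explicit constant.
-/

/-- Extrapolation to `a` from the `q + 1` equally spaced nodes to its right is exact on polynomials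
of degree at most `q`, with weights that do not depend on the step. -/
lemma exists_extrapolation_weights (q : ℕ) : ∃ w : ℕ → ℝ, ∀ p : ℝ[X], p.natDegree ≤ q →
    ∀ a h : ℝ, p.eval a = ∑ k ∈ Finset.range (q + 1), w k * p.eval (a + (k + 1) * h) := by
  refine ⟨fun k => -(-1) ^ (q + 1) * ((-1) ^ (q - k) * ((q + 1).choose (k + 1) : ℝ)),
    fun p hp a h => ?_⟩
  -- After the affine change of variable `t ↦ a + h t`, forward differences with step `1` apply.
  have hdeg : (p.comp (C h * X + C a)).natDegree < q + 1 := by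
    have h1 : (C h * X + C a).natDegree ≤ 1 := natDegree_linear_le
    calc (p.comp (C h * X + C a)).natDegree
        ≤ p.natDegree * (C h * X + C a).natDegree := natDegree_comp_le
      _ ≤ q * 1 := Nat.mul_le_mul hp h1
      _ < q + 1 := by omega
  have key := congrFun (Polynomial.fwdDiff_iter_eq_zero_of_degree_lt hdeg) 0
  rw [fwdDiff_iter_eq_sum_shift, Finset.sum_range_succ'] at key
  simp only [zsmul_eq_mul, eval_comp, eval_add, eval_mul, eval_C, eval_X, Pi.zero_apply] at key
  push_cast at key
  simp only [nsmul_eq_mul, zero_add, mul_one, Nat.cast_add, Nat.cast_one,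
    Nat.choose_zero_right, mul_zero, CharP.cast_eq_zero] at key
  have hsq : ((-1 : ℝ) ^ (q + 1)) * (-1) ^ (q + 1) = 1 := by
    rw [← mul_pow]; norm_num
  have hsum : ∑ k ∈ Finset.range (q + 1), (-(-1) ^ (q + 1) *
        ((-1) ^ (q - k) * ((q + 1).choose (k + 1) : ℝ))) * p.eval (a + (k + 1) * h)
      = -(-1) ^ (q + 1) * ∑ k ∈ Finset.range (q + 1),
        (-1) ^ (q - k) * ((q + 1).choose (k + 1) : ℝ) * p.eval (h * (k + 1) + a) := by
    rw [Finset.mul_sum]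
    refine Finset.sum_congr rfl fun k _ => ?_
    rw [show a + ((k : ℝ) + 1) * h = h * (k + 1) + a by ring]
    ring
  rw [hsum]
  linear_combination (-1) ^ (q + 1) * key - p.eval a * hsq

lemma integral_node_le (q k : ℕ) (hk : k < q + 1) (p : ℝ[X]) (a b : ℝ) (hab : a < b) :
    ∫ h in (0 : ℝ)..((b - a) / (q + 1)), (p.eval (a + (k + 1) * h)) ^ 2
      ≤ ∫ x in a..b, (p.eval x) ^ 2 := by
  have hk0 : (0 : ℝ) < k + 1 := by positivity
  have hq0 : (0 : ℝ) < q + 1 := by positivity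
  have hkq : (k : ℝ) + 1 ≤ q + 1 := by exact_mod_cast hk
  have hba : 0 < b - a := sub_pos.2 hab
  have hcont : Continuous fun x : ℝ => (p.eval x) ^ 2 := by fun_prop
  rw [integral_comp_add_mul (fun x => (p.eval x) ^ 2) hk0.ne' a, smul_eq_mul, mul_zero, add_zero]
  have hlo : a ≤ a + (k + 1) * ((b - a) / (q + 1)) := by
    have : 0 < ((k : ℝ) + 1) * ((b - a) / (q + 1)) := by positivity
    linarith
  have hhi : a + (k + 1) * ((b - a) / (q + 1)) ≤ b := by
    have : ((k : ℝ) + 1) * ((b - a) / (q + 1)) ≤ (q + 1) * ((b - a) / (q + 1)) := by gcongr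
    rw [mul_div_cancel₀ _ hq0.ne'] at this
    linarith
  have hmono : ∫ x in a..(a + (k + 1) * ((b - a) / (q + 1))), (p.eval x) ^ 2
      ≤ ∫ x in a..b, (p.eval x) ^ 2 :=
    integral_mono_interval le_rfl hlo hhi (Filter.Eventually.of_forall fun x => sq_nonneg _)
      (hcont.intervalIntegrable _ _)
  have hnn : 0 ≤ ∫ x in a..(a + (k + 1) * ((b - a) / (q + 1))), (p.eval x) ^ 2 :=
    integral_nonneg hlo fun x _ => sq_nonneg _
  have hinv : ((k : ℝ) + 1)⁻¹ ≤ 1 := inv_le_one_of_one_le₀ (by linarith [k.cast_nonneg (α := ℝ)])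
  exact (mul_le_of_le_one_left hnn hinv).trans hmono

/-- The one-dimensional endpoint inverse inequality for polynomials: for each
degree bound `q` there is `C > 0` such that for every polynomial `p` of degree
at most `q` and all `a < b`, `(b - a) p(a)² ≤ C ∫_a^b p²`. -/
theorem inverse_estimate_poly_endpoint (q : ℕ) :
    ∃ C : ℝ, 0 < C ∧
      ∀ (p : Polynomial ℝ), p.natDegree ≤ q →
        ∀ (a b : ℝ), a < b →
          (b - a) * (p.eval a) ^ 2 ≤ C * ∫ x in a..b, (p.eval x) ^ 2 := by
  obtain ⟨w, hw⟩ := exists_extrapolation_weights q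
  set S : ℝ := ∑ k ∈ Finset.range (q + 1), w k ^ 2 with hS
  have hS0 : 0 ≤ S := Finset.sum_nonneg fun k _ => sq_nonneg _
  -- One factor `q + 1` counts the nodes, the other rescales the length of the `h`-interval;
  -- `S + 1` instead of `S` makes positivity of the constant immediate.
  refine ⟨(q + 1) ^ 2 * (S + 1), by positivity, fun p hp a b hab => ?_⟩
  have hba : 0 < b - a := sub_pos.2 hab
  have hq0 : (0 : ℝ) < q + 1 := by positivity
  have hI : 0 ≤ ∫ x in a..b, (p.eval x) ^ 2 := integral_nonneg hab.le fun x _ => sq_nonneg _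
  set I := ∫ x in a..b, (p.eval x) ^ 2
  have hint : ∀ k ∈ Finset.range (q + 1), IntervalIntegrable
      (fun h : ℝ => (p.eval (a + ((k : ℝ) + 1) * h)) ^ 2) volume 0 ((b - a) / (q + 1)) :=
    fun k _ => Continuous.intervalIntegrable (by fun_prop) _ _
  have hmain : ((b - a) / (q + 1)) * (p.eval a) ^ 2 ≤ S * ((q + 1) * I) := by
    calc ((b - a) / (q + 1)) * (p.eval a) ^ 2
        = ∫ _h in (0 : ℝ)..((b - a) / (q + 1)), (p.eval a) ^ 2 := by simp
      _ ≤ ∫ h in (0 : ℝ)..((b - a) / (q + 1)),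
            S * ∑ k ∈ Finset.range (q + 1), (p.eval (a + ((k : ℝ) + 1) * h)) ^ 2 := by
          refine integral_mono_on (by positivity) (by simp)
            (Continuous.intervalIntegrable (by fun_prop) _ _) fun h _ => ?_
          rw [hw p hp a h]
          exact Finset.sum_mul_sq_le_sq_mul_sq _ _ _
      _ = S * ∑ k ∈ Finset.range (q + 1), ∫ h in (0 : ℝ)..((b - a) / (q + 1)),
            (p.eval (a + ((k : ℝ) + 1) * h)) ^ 2 := by
          rw [intervalIntegral.integral_const_mul, intervalIntegral.integral_finsetSum hint]
      _ ≤ S * ∑ _k ∈ Finset.range (q + 1), I := by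
          gcongr with k hk
          exact integral_node_le q k (Finset.mem_range.1 hk) p a b hab
      _ = S * ((q + 1) * I) := by simp
  calc (b - a) * (p.eval a) ^ 2 = (q + 1) * (((b - a) / (q + 1)) * (p.eval a) ^ 2) := by
        field_simp
    _ ≤ (q + 1) * (S * ((q + 1) * I)) := by gcongr
    _ = (q + 1) ^ 2 * S * I := by ring
    _ ≤ (q + 1) ^ 2 * (S + 1) * I := by gcongr; linarith
end
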